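/- Assume the standing assumptions and that A is recurrent. Then every almost β₀-harmonic vector for A is β₀-harmonic. -/

import Mathlib

open scoped ENNReal
open Filter

variable {V : Type*}

/-- The set of vertices of the graph of `A` that emit no edges or infinitely many edges. -/
def VInf (A : V → V → ℝ≥0∞) : Set V :=
  {v | {w | A v w ≠ 0} = ∅ ∨ {w | A v w ≠ 0}.Infinite}

/-- A set of vertices is hereditary if every edge with source in it has range in it. -/
def Hereditary (A : V → V → ℝ≥0∞) (H : Set V) : Prop :=
  ∀ ⦃v w : V⦄, v ∈ H → A v w ≠ 0 → w ∈ H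

/-- A set of vertices is saturated if it contains every finite emitter all of whose
out-neighbours lie in it. -/
def Saturated (A : V → V → ℝ≥0∞) (H : Set V) : Prop :=
  ∀ v : V, v ∉ VInf A → (∀ w, A v w ≠ 0 → w ∈ H) → v ∈ H

/-- `A` is cofinal if the only hereditary and saturated subsets are `∅` and `V`. -/
def Cofinal (A : V → V → ℝ≥0∞) : Prop :=
  ∀ H : Set V, Hereditary A H → Saturated A H → H = ∅ ∨ H = Set.univ

/-- Matrix powers of `A`, with entries in `[0,∞]`. -/
noncomputable def Apow [DecidableEq V] (A : V → V → ℝ≥0∞) : ℕ → V → V → ℝ≥0∞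
  | 0 => fun v w => if v = w then 1 else 0
  | n + 1 => fun v w => ∑' u, A v u * Apow A n u w

/-- `e^β` as an extended nonnegative real. -/
noncomputable def expb (β : ℝ) : ℝ≥0∞ := ENNReal.ofReal (Real.exp β)

/-- `e^{-nβ}` as an extended nonnegative real. -/
noncomputable def expn (β : ℝ) (n : ℕ) : ℝ≥0∞ := ENNReal.ofReal (Real.exp (-(n : ℝ) * β))

/-- A vector `ξ : V → [0,∞)` is almost `β`-harmonic for `A` if
`∑_w A_{vw} ξ_w = e^β ξ_v` off `V_∞` and `∑_w A_{vw} ξ_w ≤ e^β ξ_v` on `V_∞`. -/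
def IsAlmostHarmonic (A : V → V → ℝ≥0∞) (β : ℝ) (ξ : V → ℝ≥0∞) : Prop :=
  (∀ v, ξ v ≠ ⊤) ∧
  (∀ v, v ∉ VInf A → ∑' w, A v w * ξ w = expb β * ξ v) ∧
  (∀ v, v ∈ VInf A → ∑' w, A v w * ξ w ≤ expb β * ξ v)

/-- A vector `ξ : V → [0,∞)` is `β`-harmonic for `A` if `∑_w A_{vw} ξ_w = e^β ξ_v`
for every vertex `v`. -/
def IsHarmonic (A : V → V → ℝ≥0∞) (β : ℝ) (ξ : V → ℝ≥0∞) : Prop :=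
  (∀ v, ξ v ≠ ⊤) ∧ ∀ v, ∑' w, A v w * ξ w = expb β * ξ v

/-- The non-wandering vertices: those admitting a loop of positive length. -/
def NW (A : V → V → ℝ≥0∞) : Set V :=
  {v | Relation.TransGen (fun a b => A a b ≠ 0) v v}

/-- Standing assumptions i)–iii): `A` is cofinal, the graph has no sinks, the entries of
`A` are finite and all powers of `A` have finite entries. -/
def Standing [DecidableEq V] (A : V → V → ℝ≥0∞) : Prop :=
  Cofinal A ∧ (∀ v, ∃ w, A v w ≠ 0) ∧ (∀ v w, A v w ≠ ⊤) ∧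
    ∀ (n : ℕ) (v w : V), Apow A n v w ≠ ⊤

/-- A function `k` supported on `V_∞` is `β`-summable when
`∑_{u ∈ V_∞} ∑_n e^{-nβ} A^n_{uu} k_u < ∞`. -/
def BSummable [DecidableEq V] (A : V → V → ℝ≥0∞) (β : ℝ) (k : V → ℝ≥0∞) : Prop :=
  (∀ u, u ∉ VInf A → k u = 0) ∧ (∑' u, ∑' n, expn β n * Apow A n u u * k u) ≠ ⊤

/-- `k̂_v = ∑_{u ∈ V_∞} ∑_n e^{-nβ} A^n_{vu} k_u` (for `k` supported on `V_∞`). -/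
noncomputable def khat [DecidableEq V] (A : V → V → ℝ≥0∞) (β : ℝ) (k : V → ℝ≥0∞) (v : V) :
    ℝ≥0∞ :=
  ∑' u, ∑' n, expn β n * Apow A n v u * k u

/-- The first-return quantities `r_{vw}(n)`: `r_{vw}(0) = 0`, `r_{vw}(1) = A_{vw}` and
`r_{vw}(n+1) = ∑_{u ≠ w} A_{vu} r_{uw}(n)` for `n ≥ 1`. -/
noncomputable def fr [DecidableEq V] (A : V → V → ℝ≥0∞) (w : V) : ℕ → V → ℝ≥0∞
  | 0 => fun _ => 0
  | 1 => fun v => A v w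
  | n + 2 => fun v => ∑' u, if u = w then 0 else A v u * fr A w (n + 1) u

/- Normalise `A` to `P = e^{-β} A`, so that an almost `β`-harmonic vector `ξ` satisfies `P ξ ≤ ξ`
and can fail to be harmonic only at a vertex `u ∈ V_∞`. Iterating `P ξ + d ≤ ξ`, where
`d = ξ - P ξ`, gives `∑_n P^n d ≤ ξ`. As `ξ` is finite, `d` vanishes at `u` once `∑_n P^n_{vu}`
diverges for some `v`. Recurrence is divergence at a diagonal entry `(v, v)`, and divergence
propagates along edges in the second index. Cofinality supplies the path from `v` to `u`: the
vertices from which `u ∈ V_∞` cannot be reached form a hereditary saturated set omitting `u`. -/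

/-- The relation that `A` has a directed path, possibly of length zero, from `v` to `w`;
divergence of the Green kernel is transported along such paths. -/
def Reaches (A : V → V → ℝ≥0∞) : V → V → Prop :=
  Relation.ReflTransGen fun v w => A v w ≠ 0

/-- The Green kernel `∑_n P^n_{vw}` of a matrix `P`. It controls superharmonic vectors of
`P`; weights `e^{-nβ}` are absorbed by taking `P = e^{-β} A`. -/
noncomputable def greenKernel [DecidableEq V] (P : V → V → ℝ≥0∞) (v w : V) : ℝ≥0∞ :=
  ∑' n, Apow P n v w

/-- A superharmonic vector of `P`: one with `P ξ ≤ ξ`. This is what remains of almost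
harmonicity after normalisation. Infinite entries are allowed. -/
def IsSuperharmonic (P : V → V → ℝ≥0∞) (ξ : V → ℝ≥0∞) : Prop :=
  ∀ v, ∑' w, P v w * ξ w ≤ ξ v

section Graph

variable {A : V → V → ℝ≥0∞}

theorem Reaches.smul {c : ℝ≥0∞} (hc : c ≠ 0) {v w : V} (h : Reaches A v w) :
    Reaches (c • A) v w :=
  Relation.ReflTransGen.mono (fun _ _ hA => mul_ne_zero hc hA) v w h

theorem hereditary_setOf_not_reaches (A : V → V → ℝ≥0∞) (u : V) :
    Hereditary A {v | ¬ Reaches A v u} :=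
  fun _ _ hv hvw hw => hv (.head hvw hw)

theorem saturated_setOf_not_reaches {u : V} (hu : u ∈ VInf A) :
    Saturated A {v | ¬ Reaches A v u} := by
  intro v hv hout hvu
  obtain rfl | ⟨w, hvw, hwu⟩ := Relation.ReflTransGen.cases_head hvu
  · exact hv hu
  · exact hout w hvw hwu

theorem Cofinal.reaches_of_mem_VInf (hA : Cofinal A) {u : V} (hu : u ∈ VInf A) (v : V) :
    Reaches A v u := by
  have hempty : {v | ¬ Reaches A v u} = ∅ :=
    (hA _ (hereditary_setOf_not_reaches A u) (saturated_setOf_not_reaches hu)).resolve_right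
      fun huniv => huniv.ge (Set.mem_univ u) .refl
  exact not_not.mp fun hv => hempty.le hv

end Graph

section Powers

variable [DecidableEq V]

theorem Apow_smul (c : ℝ≥0∞) (A : V → V → ℝ≥0∞) (n : ℕ) (v w : V) :
    Apow (c • A) n v w = c ^ n * Apow A n v w := by
  induction n generalizing v with
  | zero => simp [Apow]
  | succ n ih =>
    simp only [Apow, ih, Pi.smul_apply, smul_eq_mul, ← ENNReal.tsum_mul_left]
    exact tsum_congr fun u => by ring

theorem Apow_mul_le_Apow_succ (P : V → V → ℝ≥0∞) (n : ℕ) (v w u : V) :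
    Apow P n v w * P w u ≤ Apow P (n + 1) v u := by
  induction n generalizing v with
  | zero => obtain rfl | hvw := eq_or_ne v w <;> simp [Apow, *]
  | succ n ih =>
    calc Apow P (n + 1) v w * P w u = ∑' x, P v x * (Apow P n x w * P w u) := by
          simp only [Apow, ← ENNReal.tsum_mul_right, mul_assoc]
      _ ≤ ∑' x, P v x * Apow P (n + 1) x u := by gcongr with x; exact ih x

theorem tsum_Apow_zero_mul (P : V → V → ℝ≥0∞) (d : V → ℝ≥0∞) (v : V) :
    ∑' w, Apow P 0 v w * d w = d v := by
  simp [Apow]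

theorem tsum_Apow_succ_mul (P : V → V → ℝ≥0∞) (d : V → ℝ≥0∞) (n : ℕ) (v : V) :
    ∑' w, Apow P (n + 1) v w * d w = ∑' x, P v x * ∑' w, Apow P n x w * d w := by
  simp only [Apow, ← ENNReal.tsum_mul_right, ← ENNReal.tsum_mul_left, mul_assoc]
  exact ENNReal.tsum_comm

end Powers

section GreenKernel

variable [DecidableEq V] {P : V → V → ℝ≥0∞}

theorem greenKernel_mul_le (P : V → V → ℝ≥0∞) (v w u : V) :
    greenKernel P v w * P w u ≤ greenKernel P v u :=
  calc greenKernel P v w * P w u = ∑' n, Apow P n v w * P w u := ENNReal.tsum_mul_right.symm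
    _ ≤ ∑' n, Apow P (n + 1) v u := ENNReal.tsum_le_tsum fun n => Apow_mul_le_Apow_succ P n v w u
    _ ≤ greenKernel P v u :=
      ENNReal.tsum_comp_le_tsum_of_injective (add_left_injective 1) fun n => Apow P n v u

theorem Reaches.greenKernel_eq_top {v w u : V} (hwu : Reaches P w u)
    (hvw : greenKernel P v w = ⊤) : greenKernel P v u = ⊤ := by
  induction hwu with
  | refl => exact hvw
  | @tail x y _ hxy ih =>
    refine top_le_iff.mp ?_
    calc ⊤ = greenKernel P v x * P x y := by rw [ih, ENNReal.top_mul hxy]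
      _ ≤ greenKernel P v y := greenKernel_mul_le P v x y

theorem sum_range_tsum_Apow_mul_le {ξ d : V → ℝ≥0∞}
    (h : ∀ v, ∑' w, P v w * ξ w + d v ≤ ξ v) (N : ℕ) (v : V) :
    ∑ n ∈ Finset.range N, ∑' w, Apow P n v w * d w ≤ ξ v := by
  induction N generalizing v with
  | zero => simp
  | succ N ih =>
    calc ∑ n ∈ Finset.range (N + 1), ∑' w, Apow P n v w * d w
        = ∑' x, P v x * ∑ n ∈ Finset.range N, ∑' w, Apow P n x w * d w + d v := by
          simp only [Finset.sum_range_succ', tsum_Apow_zero_mul, tsum_Apow_succ_mul,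
            Finset.mul_sum, Summable.tsum_finsetSum fun _ _ => ENNReal.summable]
      _ ≤ ∑' x, P v x * ξ x + d v := by gcongr with x; exact ih x
      _ ≤ ξ v := h v

theorem tsum_greenKernel_mul_le {ξ d : V → ℝ≥0∞}
    (h : ∀ v, ∑' w, P v w * ξ w + d v ≤ ξ v) (v : V) :
    ∑' w, greenKernel P v w * d w ≤ ξ v :=
  calc ∑' w, greenKernel P v w * d w = ∑' n, ∑' w, Apow P n v w * d w := by
        simp only [greenKernel, ← ENNReal.tsum_mul_right]
        exact ENNReal.tsum_comm
    _ ≤ ξ v := ENNReal.tsum_le_of_sum_range_le fun N => sum_range_tsum_Apow_mul_le h N v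

theorem IsSuperharmonic.tsum_mul_eq_of_greenKernel_eq_top {ξ : V → ℝ≥0∞}
    (hξ : IsSuperharmonic P ξ) {v u : V} (hv : ξ v ≠ ⊤) (hvu : greenKernel P v u = ⊤) :
    ∑' w, P u w * ξ w = ξ u := by
  let d : V → ℝ≥0∞ := fun x => ξ x - ∑' w, P x w * ξ w
  have hbound : greenKernel P v u * d u ≤ ξ v :=
    (ENNReal.le_tsum u).trans <|
      tsum_greenKernel_mul_le (fun x => (add_tsub_cancel_of_le (hξ x)).le) v
  have hd : d u = 0 := by
    by_contra hd
    rw [hvu, ENNReal.top_mul hd] at hbound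
    exact hv (top_le_iff.mp hbound)
  exact (hξ u).antisymm (tsub_eq_zero_iff_le.mp hd)

end GreenKernel

section Normalisation

variable {A : V → V → ℝ≥0∞} {β : ℝ} {ξ : V → ℝ≥0∞}

theorem expb_ne_zero (β : ℝ) : expb β ≠ 0 :=
  (ENNReal.ofReal_pos.mpr β.exp_pos).ne'

theorem expb_ne_top (β : ℝ) : expb β ≠ ⊤ :=
  ENNReal.ofReal_ne_top

theorem expn_eq_inv_expb_pow (β : ℝ) (n : ℕ) : expn β n = (expb β)⁻¹ ^ n := by
  rw [expn, expb, ← ENNReal.ofReal_inv_of_pos β.exp_pos, ← Real.exp_neg,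
    ← ENNReal.ofReal_pow (Real.exp_pos _).le, ← Real.exp_nat_mul, neg_mul, mul_neg]

theorem greenKernel_inv_expb_smul [DecidableEq V] (A : V → V → ℝ≥0∞) (β : ℝ) (v w : V) :
    greenKernel ((expb β)⁻¹ • A) v w = ∑' n, Apow A n v w * expn β n :=
  tsum_congr fun n => by rw [Apow_smul, expn_eq_inv_expb_pow, mul_comm]

theorem tsum_inv_expb_smul_mul (A : V → V → ℝ≥0∞) (β : ℝ) (ξ : V → ℝ≥0∞) (v : V) :
    ∑' w, ((expb β)⁻¹ • A) v w * ξ w = (expb β)⁻¹ * ∑' w, A v w * ξ w := by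
  simp only [Pi.smul_apply, smul_eq_mul, mul_assoc, ENNReal.tsum_mul_left]

theorem IsAlmostHarmonic.tsum_mul_le (hξ : IsAlmostHarmonic A β ξ) (v : V) :
    ∑' w, A v w * ξ w ≤ expb β * ξ v :=
  (em (v ∈ VInf A)).elim (hξ.2.2 v) fun hv => (hξ.2.1 v hv).le

theorem IsAlmostHarmonic.isSuperharmonic (hξ : IsAlmostHarmonic A β ξ) :
    IsSuperharmonic ((expb β)⁻¹ • A) ξ := fun v => by
  rw [tsum_inv_expb_smul_mul, ENNReal.inv_mul_le_iff (expb_ne_zero β) (expb_ne_top β)]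
  exact hξ.tsum_mul_le v

end Normalisation

theorem stmt11_general [DecidableEq V] {A : V → V → ℝ≥0∞} (hA : Cofinal A) {β : ℝ} {v w : V}
    (hvw : ∑' n : ℕ, Apow A n v w * expn β n = ⊤) {ξ : V → ℝ≥0∞}
    (hξ : IsAlmostHarmonic A β ξ) : IsHarmonic A β ξ := by
  refine ⟨hξ.1, fun u => ?_⟩
  by_cases hu : u ∈ VInf A
  · have hwu : Reaches ((expb β)⁻¹ • A) w u :=
      (hA.reaches_of_mem_VInf hu w).smul (ENNReal.inv_ne_zero.mpr (expb_ne_top β))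
    have hgreen : greenKernel ((expb β)⁻¹ • A) v u = ⊤ :=
      hwu.greenKernel_eq_top ((greenKernel_inv_expb_smul A β v w).trans hvw)
    have hPξ : (expb β)⁻¹ * ∑' x, A u x * ξ x = ξ u :=
      (tsum_inv_expb_smul_mul A β ξ u).symm.trans <|
        hξ.isSuperharmonic.tsum_mul_eq_of_greenKernel_eq_top (hξ.1 v) hgreen
    rw [← hPξ, ENNReal.mul_inv_cancel_left (expb_ne_zero β) (expb_ne_top β)]
  · exact hξ.2.1 u hu

/-- Under the standing assumptions, if `A` is recurrent then every almost
`β₀`-harmonic vector for `A` is `β₀`-harmonic. -/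
theorem stmt11 [Countable V] [DecidableEq V] (A : V → V → ℝ≥0∞)
    (hst : Standing A) (β₀ : ℝ)
    (hβ₀ : ∀ v ∈ NW A,
      Filter.limsup (fun n : ℕ => Apow A n v v ^ ((n : ℝ)⁻¹)) Filter.atTop = expb β₀)
    (hrec : ∃ v ∈ NW A, ∑' n : ℕ, Apow A n v v * expn β₀ n = ⊤) :
    ∀ ξ : V → ℝ≥0∞, IsAlmostHarmonic A β₀ ξ → IsHarmonic A β₀ ξ := by
  obtain ⟨v, -, hv⟩ := hrec
  exact fun ξ => stmt11_general hst.1 hv
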